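/- arXiv:1802.01941 — 4 statements merged into one kernel-verified Lean document; each statement's English description precedes it below -/
import Mathlib

section
/- Let F be a field of characteristic different from 2, let d ∈ F× be a non-square, and let E = F(√d) be the corresponding quadratic field extension, with norm map N_{E/F}. Let ε ∈ F× be an element that is not a norm from E×, and assume every element of F× lies in N_{E/F}(E×) ∪ ε·N_{E/F}(E×). Let B(E) ⊆ SL₂(E) be the subgroup of upper triangular matrices, and set η₁ = [[1,0],[√d,1]] and η₂ = [[1,0],[ε√d,1]] in SL₂(E). Then SL₂(E) is the disjoint union of the three double cosets B(E)·SL₂(F), B(E)·η₁·SL₂(F) and B(E)·η₂·SL₂(F); that is, every g ∈ SL₂(E) can be written as b·η·h with b ∈ B(E), h ∈ SL₂(F) and η ∈ {1, η₁, η₂}, and for distinct choices of η these double cosets are pairwise disjoint. -/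
open Matrix

/-- The double coset `B(E) · η · SL₂(F)` inside `SL₂(E)`, where `B(E)` is the Borel subgroup
of upper triangular matrices and `SL₂(F)` is embedded in `SL₂(E)` via `algebraMap F E`. -/
def doubleCoset (F : Type*) {E : Type*} [Field F] [Field E] [Algebra F E]
    (η : SpecialLinearGroup (Fin 2) E) : Set (SpecialLinearGroup (Fin 2) E) :=
  {g | ∃ (b : SpecialLinearGroup (Fin 2) E) (h₀ : SpecialLinearGroup (Fin 2) F),
      (b : Matrix (Fin 2) (Fin 2) E) 1 0 = 0 ∧
      g = b * η * SpecialLinearGroup.map (algebraMap F E) h₀}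

theorem mem_coset_aux {F E : Type*} [Field F] [Field E] [Algebra F E]
    (g η : SpecialLinearGroup (Fin 2) E) (t : E) (p q r u : F) (hdet : p * u - q * r = 1)
    (h0 : g.1 1 0 = t * (η.1 1 0 * algebraMap F E p + η.1 1 1 * algebraMap F E r))
    (h1 : g.1 1 1 = t * (η.1 1 0 * algebraMap F E q + η.1 1 1 * algebraMap F E u)) :
    g ∈ doubleCoset F η := by
  let h : SpecialLinearGroup (Fin 2) F := ⟨!![p, q; r, u], by rw [det_fin_two_of]; exact hdet⟩
  refine ⟨g * (SpecialLinearGroup.map (algebraMap F E) h)⁻¹ * η⁻¹, h, ?_, by group⟩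
  have hd' := congrArg (algebraMap F E) hdet
  simp only [map_sub, map_mul, map_one] at hd'
  change ((g.1 * adjugate (!![p, q; r, u].map (algebraMap F E))) * adjugate η.1) 1 0 = 0
  simp only [adjugate_fin_two, mul_apply, Fin.sum_univ_two]
  simp
  rw [h0, h1]
  ring

theorem inv_aux {F E : Type*} [Field F] [Field E] [Algebra F E] (σ : E ≃ₐ[F] E)
    (g η : SpecialLinearGroup (Fin 2) E) (hg : g ∈ doubleCoset F η) :
    ∃ t : E, t ≠ 0 ∧ g.1 1 0 * σ (g.1 1 1) - g.1 1 1 * σ (g.1 1 0) =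
      t * σ t * (η.1 1 0 * σ (η.1 1 1) - η.1 1 1 * σ (η.1 1 0)) := by
  obtain ⟨b, h, hb, rfl⟩ := hg
  have hbd := b.2
  rw [det_fin_two, hb] at hbd
  refine ⟨b.1 1 1, ?_, ?_⟩
  · intro h0
    rw [h0] at hbd
    simp at hbd
  have hd' := congrArg (algebraMap F E) h.2
  rw [det_fin_two] at hd'
  simp only [map_sub, map_mul, map_one] at hd'
  change (b.1 * η.1 * h.1.map (algebraMap F E)) 1 0 * σ ((b.1 * η.1 * h.1.map (algebraMap F E)) 1 1) -
    (b.1 * η.1 * h.1.map (algebraMap F E)) 1 1 * σ ((b.1 * η.1 * h.1.map (algebraMap F E)) 1 0) = _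
  simp only [mul_apply, Fin.sum_univ_two, hb, map_apply, map_add, map_mul, AlgEquiv.commutes,
    map_zero, zero_mul, zero_add]
  linear_combination (b.1 1 1 * σ (b.1 1 1) * (η.1 1 0 * σ (η.1 1 1) - η.1 1 1 * σ (η.1 1 0))) * hd'

/-- the double coset decomposition
`SL₂(E) = B(E)·SL₂(F) ⊔ B(E)·η₁·SL₂(F) ⊔ B(E)·η₂·SL₂(F)` for a quadratic
extension `E = F(√d)` with `[F^× : N_{E/F}(E^×)] = 2` and `ε` a non-norm. -/
theorem stmt0 {F E : Type*} [Field F] [Field E] [Algebra F E]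
    (hchar : (2 : F) ≠ 0)
    (σ : E ≃ₐ[F] E) (hσ2 : ∀ x : E, σ (σ x) = x)
    (hσne : σ ≠ AlgEquiv.refl)
    (hfix : ∀ x : E, σ x = x ↔ ∃ y : F, algebraMap F E y = x)
    (d : F) (hd : ¬ ∃ a : F, a ^ 2 = d)
    (sqrtd : E) (hsqrtd : sqrtd ^ 2 = algebraMap F E d)
    (hEgen : ∀ x : E, ∃ a b : F, x = algebraMap F E a + algebraMap F E b * sqrtd)
    (ε : F)
    (hεnotnorm : ¬ ∃ x : E, x * σ x = algebraMap F E ε)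
    (hcover : ∀ a : F, a ≠ 0 →
      (∃ x : E, x * σ x = algebraMap F E a) ∨
      (∃ x : E, algebraMap F E ε * (x * σ x) = algebraMap F E a))
    (η₁ η₂ : SpecialLinearGroup (Fin 2) E)
    (hη₁ : (η₁ : Matrix (Fin 2) (Fin 2) E) = !![1, 0; sqrtd, 1])
    (hη₂ : (η₂ : Matrix (Fin 2) (Fin 2) E) = !![1, 0; algebraMap F E ε * sqrtd, 1]) :
    (∀ g : SpecialLinearGroup (Fin 2) E,
        g ∈ doubleCoset F (1 : SpecialLinearGroup (Fin 2) E) ∪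
          doubleCoset F η₁ ∪ doubleCoset F η₂) ∧
    doubleCoset F (1 : SpecialLinearGroup (Fin 2) E) ∩ doubleCoset F η₁ = ∅ ∧
    doubleCoset F (1 : SpecialLinearGroup (Fin 2) E) ∩ doubleCoset F η₂ = ∅ ∧
    doubleCoset F η₁ ∩ doubleCoset F η₂ = ∅ := by
  have hε0 : ε ≠ 0 := by
    rintro rfl
    exact hεnotnorm ⟨0, by simp⟩
  have hσs : σ sqrtd = -sqrtd := by
    have h1 : σ sqrtd ^ 2 = sqrtd ^ 2 := by rw [← map_pow, hsqrtd, AlgEquiv.commutes]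
    rcases sq_eq_sq_iff_eq_or_eq_neg.mp h1 with h | h
    · obtain ⟨y, hy⟩ := (hfix _).mp h
      refine absurd ⟨y, (algebraMap F E).injective ?_⟩ hd
      rw [map_pow, hy, hsqrtd]
    · exact h
  have hs0 : sqrtd ≠ 0 := by
    rintro rfl
    refine hd ⟨0, (algebraMap F E).injective ?_⟩
    rw [← hsqrtd]; simp
  have h2 : (2 : E) ≠ 0 := by
    intro h
    apply hchar
    apply (algebraMap F E).injective
    rw [map_ofNat, map_zero]; exact h
  have hεE : algebraMap F E ε ≠ 0 := by simpa using hε0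
  have a0 : η₁.1 1 0 = sqrtd := by rw [hη₁]; rfl
  have a1 : η₁.1 1 1 = 1 := by rw [hη₁]; rfl
  have b0 : η₂.1 1 0 = algebraMap F E ε * sqrtd := by rw [hη₂]; rfl
  have b1 : η₂.1 1 1 = 1 := by rw [hη₂]; rfl
  have c0 : (1 : SpecialLinearGroup (Fin 2) E).1 1 0 = 0 := by simp
  have c1 : (1 : SpecialLinearGroup (Fin 2) E).1 1 1 = 1 := by simp
  refine ⟨?_, ?_, ?_, ?_⟩
  · intro g
    obtain ⟨x0, x1, hx⟩ := hEgen (g.1 1 0)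
    obtain ⟨y0, y1, hy⟩ := hEgen (g.1 1 1)
    have scale : ∀ (t : E), t ≠ 0 → ∀ (n : F), t * σ t = algebraMap F E n →
        ∃ p0 p1 q0 q1 : F, g.1 1 0 = t * (algebraMap F E p0 + algebraMap F E p1 * sqrtd) ∧
          g.1 1 1 = t * (algebraMap F E q0 + algebraMap F E q1 * sqrtd) ∧
          x1 * y0 - x0 * y1 = n * (p1 * q0 - p0 * q1) := by
      intro t ht n hn
      obtain ⟨p0, p1, hp⟩ := hEgen (g.1 1 0 / t)
      obtain ⟨q0, q1, hq⟩ := hEgen (g.1 1 1 / t)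
      have hp' : g.1 1 0 = t * (algebraMap F E p0 + algebraMap F E p1 * sqrtd) := by
        rw [← hp]; field_simp
      have hq' : g.1 1 1 = t * (algebraMap F E q0 + algebraMap F E q1 * sqrtd) := by
        rw [← hq]; field_simp
      refine ⟨p0, p1, q0, q1, hp', hq', (algebraMap F E).injective ?_⟩
      rw [hx] at hp'
      rw [hy] at hq'
      have hp'' := congrArg σ hp'
      have hq'' := congrArg σ hq'
      simp only [map_add, map_mul, AlgEquiv.commutes, hσs] at hp'' hq''
      have key : (algebraMap F E x0 + algebraMap F E x1 * sqrtd) *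
            (algebraMap F E y0 + algebraMap F E y1 * -sqrtd) -
          (algebraMap F E y0 + algebraMap F E y1 * sqrtd) *
            (algebraMap F E x0 + algebraMap F E x1 * -sqrtd) =
          t * σ t * (2 * sqrtd * (algebraMap F E p1 * algebraMap F E q0 -
            algebraMap F E p0 * algebraMap F E q1)) := by
        rw [hp'', hq'', hp', hq']; ring
      rw [hn] at key
      apply mul_left_cancel₀ (mul_ne_zero h2 hs0)
      simp only [map_mul, map_sub]
      linear_combination key
    by_cases hD : x1 * y0 - x0 * y1 = 0
    · left; left
      by_cases he : g.1 1 1 = 0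
      · exact mem_coset_aux g 1 (g.1 1 0) 0 (-1) 1 0 (by ring) (by rw [c0, c1]; simp)
          (by rw [c0, c1, he]; simp)
      · have : ∃ p : F, g.1 1 0 = g.1 1 1 * algebraMap F E p := by
          have hDE := congrArg (algebraMap F E) hD
          simp only [map_mul, map_sub, map_zero] at hDE
          by_cases hy0 : y0 = 0
          · have hy1 : y1 ≠ 0 := by
              rintro rfl
              apply he; rw [hy, hy0]; simp
            have hy1E : algebraMap F E y1 ≠ 0 := by simpa using hy1
            refine ⟨x1 / y1, ?_⟩
            rw [hx, hy, map_div₀]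
            field_simp
            linear_combination -hDE
          · have hy0E : algebraMap F E y0 ≠ 0 := by simpa using hy0
            refine ⟨x0 / y0, ?_⟩
            rw [hx, hy, map_div₀]
            field_simp
            linear_combination sqrtd * hDE
        obtain ⟨p, hp⟩ := this
        exact mem_coset_aux g 1 (g.1 1 1) 1 0 p 1 (by ring) (by rw [c0, c1, hp]; simp)
          (by rw [c0, c1]; simp)
    · rcases hcover _ hD with ⟨t, ht⟩ | ⟨t, ht⟩
      · have ht0 : t ≠ 0 := by
          rintro rfl
          apply hD
          apply (algebraMap F E).injective
          rw [← ht]; simp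
        obtain ⟨p0, p1, q0, q1, hp, hq, hpq⟩ := scale t ht0 _ ht
        left; right
        refine mem_coset_aux g η₁ t p1 q1 p0 q0 ?_ ?_ ?_
        · apply mul_left_cancel₀ hD
          linear_combination -hpq
        · rw [hp, a0, a1]; ring
        · rw [hq, a0, a1]; ring
      · have ht0 : t ≠ 0 := by
          rintro rfl
          apply hD
          apply (algebraMap F E).injective
          rw [← ht]; simp
        obtain ⟨p0, p1, q0, q1, hp, hq, hpq⟩ := scale t ht0 ((x1 * y0 - x0 * y1) / ε)
          (by rw [map_div₀, ← ht]; field_simp)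
        right
        refine mem_coset_aux g η₂ t (p1 / ε) (q1 / ε) p0 q0 ?_ ?_ ?_
        · apply mul_left_cancel₀ hD
          field_simp at hpq ⊢
          linear_combination -hpq
        · rw [hp, b0, b1, map_div₀]; field_simp; ring
        · rw [hq, b0, b1, map_div₀]; field_simp; ring
  · rw [Set.eq_empty_iff_forall_notMem]
    rintro g ⟨hg1, hg2⟩
    obtain ⟨t, ht, h⟩ := inv_aux σ g _ hg1
    obtain ⟨u, hu, h'⟩ := inv_aux σ g _ hg2
    have hσu : σ u ≠ 0 := by simpa using hu
    rw [h, a0, a1, c0, c1, hσs] at h'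
    simp only [map_one, map_zero] at h'
    refine mul_ne_zero (mul_ne_zero hu hσu) (mul_ne_zero h2 hs0) ?_
    linear_combination -h'
  · rw [Set.eq_empty_iff_forall_notMem]
    rintro g ⟨hg1, hg2⟩
    obtain ⟨t, ht, h⟩ := inv_aux σ g _ hg1
    obtain ⟨u, hu, h'⟩ := inv_aux σ g _ hg2
    have hσu : σ u ≠ 0 := by simpa using hu
    rw [h, b0, b1, c0, c1, map_mul, hσs] at h'
    simp only [map_one, map_zero, AlgEquiv.commutes] at h'
    refine mul_ne_zero (mul_ne_zero hu hσu) (mul_ne_zero h2 (mul_ne_zero hεE hs0)) ?_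
    linear_combination -h'
  · rw [Set.eq_empty_iff_forall_notMem]
    rintro g ⟨hg1, hg2⟩
    obtain ⟨t, ht, h⟩ := inv_aux σ g _ hg1
    obtain ⟨u, hu, h'⟩ := inv_aux σ g _ hg2
    have hσu : σ u ≠ 0 := by simpa using hu
    rw [h, a0, a1, b0, b1, map_mul, hσs] at h'
    simp only [map_one, AlgEquiv.commutes] at h'
    refine hεnotnorm ⟨t / u, ?_⟩
    rw [map_div₀]
    field_simp
    apply mul_left_cancel₀ (mul_ne_zero h2 hs0)
    linear_combination h'
end

section
/- Let E/F be a quadratic Galois extension of fields with Galois group {1, σ} and norm map N_{E/F}(x) = x·σ(x). Let G₁ = {(g,λ) ∈ GL₂(E) × F× : λ²·N_{E/F}(det g) = 1}, a subgroup of GL₂(E) × F×, and let Z = {(t·I₂, N_{E/F}(t)⁻¹) : t ∈ E×}, a central subgroup of G₁. Let G₂ = {g ∈ GL₂(E) : det g ∈ F×}, which contains the scalar matrices F×·I₂ as a central subgroup. Then the map g ↦ (g, (det g)⁻¹) from G₂ to G₁ induces a group isomorphism G₂/(F×·I₂) ≅ G₁/Z. -/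
open Matrix

/-- for a quadratic Galois extension `E/F` with Galois group `{1, σ}`,
the map `g ↦ (g, (det g)⁻¹)` induces a group isomorphism
`{g ∈ GL₂(E) : det g ∈ F^×}/F^× ≅ G₁/Z`, where
`G₁ = {(g,λ) ∈ GL₂(E) × F^× : λ²·N_{E/F}(det g) = 1}` and
`Z = {(t·I₂, N_{E/F}(t)⁻¹) : t ∈ E^×}`. -/
theorem stmt1 {F E : Type*} [Field F] [Field E] [Algebra F E]
    (σ : E ≃ₐ[F] E) (hσ2 : ∀ x : E, σ (σ x) = x)
    (hσne : σ ≠ AlgEquiv.refl)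
    (hfix : ∀ x : E, σ x = x ↔ ∃ y : F, algebraMap F E y = x)
    (G₁ : Subgroup (GL (Fin 2) E × Fˣ))
    (hG₁ : ∀ p : GL (Fin 2) E × Fˣ, p ∈ G₁ ↔
      (algebraMap F E (p.2 : F)) ^ 2 *
        ((p.1 : Matrix (Fin 2) (Fin 2) E).det * σ ((p.1 : Matrix (Fin 2) (Fin 2) E).det)) = 1)
    (Z : Subgroup (GL (Fin 2) E × Fˣ))
    (hZ : ∀ p : GL (Fin 2) E × Fˣ, p ∈ Z ↔ ∃ t : Eˣ,
      (p.1 : Matrix (Fin 2) (Fin 2) E) = (t : E) • (1 : Matrix (Fin 2) (Fin 2) E) ∧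
      algebraMap F E (p.2 : F) * ((t : E) * σ (t : E)) = 1)
    (G₂ : Subgroup (GL (Fin 2) E))
    (hG₂ : ∀ g : GL (Fin 2) E, g ∈ G₂ ↔
      ∃ c : F, (g : Matrix (Fin 2) (Fin 2) E).det = algebraMap F E c)
    (ZF : Subgroup (GL (Fin 2) E))
    (hZF : ∀ g : GL (Fin 2) E, g ∈ ZF ↔
      ∃ c : Fˣ, (g : Matrix (Fin 2) (Fin 2) E)
        = algebraMap F E (c : F) • (1 : Matrix (Fin 2) (Fin 2) E))
    [(ZF.subgroupOf G₂).Normal] [(Z.subgroupOf G₁).Normal] :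
    ∃ e : (G₂ ⧸ ZF.subgroupOf G₂) ≃* (G₁ ⧸ Z.subgroupOf G₁),
      ∀ (g : G₂) (p : G₁),
        (p : GL (Fin 2) E × Fˣ).1 = (g : GL (Fin 2) E) →
        algebraMap F E ((p : GL (Fin 2) E × Fˣ).2 : F) *
          ((g : GL (Fin 2) E) : Matrix (Fin 2) (Fin 2) E).det = 1 →
        e (QuotientGroup.mk g) = QuotientGroup.mk p := by
  classical
  have hinj : Function.Injective (algebraMap F E) := (algebraMap F E).injective
  have hdet0 : ∀ g : GL (Fin 2) E, (g : Matrix (Fin 2) (Fin 2) E).det ≠ 0 := fun g =>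
    ((Matrix.isUnit_iff_isUnit_det _).1 g.isUnit).ne_zero
  have hex : ∀ g : G₂, ∃ p : G₁, (p : GL (Fin 2) E × Fˣ).1 = (g : GL (Fin 2) E) ∧
      algebraMap F E ((p : GL (Fin 2) E × Fˣ).2 : F) *
          ((g : GL (Fin 2) E) : Matrix (Fin 2) (Fin 2) E).det = 1 := by
    rintro ⟨g, hg⟩
    obtain ⟨c, hc⟩ := (hG₂ g).1 hg
    have hd := hdet0 g
    have hc0 : c ≠ 0 := by
      rintro rfl
      exact hd (by rw [hc, map_zero])
    have hc0' : algebraMap F E c ≠ 0 := by rw [← hc]; exact hd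
    refine ⟨⟨(g, (Units.mk0 c hc0)⁻¹), (hG₁ _).2 ?_⟩, rfl, ?_⟩
    · simp only [hc, AlgEquiv.commutes, Units.val_inv_eq_inv_val, Units.val_mk0, map_inv₀]
      field_simp
    · simp only [hc, Units.val_inv_eq_inv_val, Units.val_mk0, map_inv₀]
      field_simp
  have huniq : ∀ (g : G₂) (p q : G₁), (p : GL (Fin 2) E × Fˣ).1 = (g : GL (Fin 2) E) →
      algebraMap F E ((p : GL (Fin 2) E × Fˣ).2 : F) *
          ((g : GL (Fin 2) E) : Matrix (Fin 2) (Fin 2) E).det = 1 →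
      (q : GL (Fin 2) E × Fˣ).1 = (g : GL (Fin 2) E) →
      algebraMap F E ((q : GL (Fin 2) E × Fˣ).2 : F) *
          ((g : GL (Fin 2) E) : Matrix (Fin 2) (Fin 2) E).det = 1 → p = q := by
    intro g p q h1 h2 h3 h4
    apply Subtype.ext
    apply Prod.ext
    · rw [h1, h3]
    · apply Units.ext
      apply hinj
      exact mul_right_cancel₀ (hdet0 g) (h2.trans h4.symm)
  choose f hf1 hf2 using hex
  let φ : G₂ →* G₁ := MonoidHom.mk' f (by
    intro a b
    refine huniq (a * b) _ _ (hf1 _) (hf2 _) ?_ ?_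
    · simp [hf1]
    · have h1 := hf2 a
      have h2 := hf2 b
      simp only [Subgroup.coe_mul, Prod.snd_mul, Units.val_mul, map_mul, Matrix.det_mul]
      linear_combination (algebraMap F E ((f b : GL (Fin 2) E × Fˣ).2 : F) *
          ((b : GL (Fin 2) E) : Matrix (Fin 2) (Fin 2) E).det) * h1 + h2)
  have hφ : ∀ g, φ g = f g := fun _ => rfl
  let ψ : G₂ →* (G₁ ⧸ Z.subgroupOf G₁) := (QuotientGroup.mk' (Z.subgroupOf G₁)).comp φ
  have hψ : ∀ g, ψ g = QuotientGroup.mk (f g) := fun _ => rfl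
  have hker : ∀ g, ψ g = 1 ↔ g ∈ ZF.subgroupOf G₂ := by
    intro g
    rw [hψ, QuotientGroup.eq_one_iff, Subgroup.mem_subgroupOf, Subgroup.mem_subgroupOf, hZ, hZF]
    have h2 := hf2 g
    rw [hf1]
    constructor
    · rintro ⟨t, ht, hl⟩
      rw [ht] at h2
      have ht0 : (t : E) ≠ 0 := t.ne_zero
      have h3 : σ (t : E) = t := by
        simp only [Matrix.det_smul, Matrix.det_one, Fintype.card_fin] at h2
        have hl0 := left_ne_zero_of_mul_eq_one h2
        apply mul_left_cancel₀ (mul_ne_zero hl0 ht0)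
        linear_combination hl - h2
      obtain ⟨y, hy⟩ := (hfix _).1 h3
      have hy0 : y ≠ 0 := by
        rintro rfl
        exact ht0 (by rw [← hy, map_zero])
      exact ⟨Units.mk0 y hy0, by rw [ht, Units.val_mk0, hy]⟩
    · rintro ⟨c, hc⟩
      rw [hc] at h2
      simp only [Matrix.det_smul, Matrix.det_one, Fintype.card_fin] at h2
      refine ⟨Units.map (algebraMap F E).toMonoidHom c, hc, ?_⟩
      simp only [Units.coe_map, RingHom.toMonoidHom_eq_coe, MonoidHom.coe_coe, AlgEquiv.commutes]
      linear_combination h2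
  have hsurj : Function.Surjective ψ := by
    intro q
    obtain ⟨⟨⟨g, l⟩, hp⟩, rfl⟩ := QuotientGroup.mk_surjective q
    have hp' := (hG₁ _).1 hp
    simp only at hp'
    have hd := hdet0 g
    set d := (g : Matrix (Fin 2) (Fin 2) E).det with hdd
    have hl0 : algebraMap F E (l : F) ≠ 0 := by
      rw [Ne, map_eq_zero]; exact l.ne_zero
    obtain ⟨t, ht0, ht⟩ : ∃ t : E, t ≠ 0 ∧ σ t = (algebraMap F E (l : F) * d) * t := by
      set u := algebraMap F E (l : F) * d with hu
      have huu : u * σ u = 1 := by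
        rw [hu, map_mul, AlgEquiv.commutes]
        linear_combination hp'
      by_cases h : 1 + σ u = 0
      · have hu1 : u = -1 := by
          linear_combination u * h - huu
        obtain ⟨x, hx⟩ : ∃ x, σ x ≠ x := by
          by_contra hcon
          push Not at hcon
          exact hσne (AlgEquiv.ext hcon)
        refine ⟨x - σ x, sub_ne_zero.2 hx.symm, ?_⟩
        rw [map_sub, hσ2, hu1]
        ring
      · refine ⟨1 + σ u, h, ?_⟩
        rw [map_add, map_one, hσ2]
        linear_combination -huu
    have hσt0 : σ t ≠ 0 := by simpa using ht0
    let T : GL (Fin 2) E := Matrix.GeneralLinearGroup.mkOfDetNeZero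
      (t • (1 : Matrix (Fin 2) (Fin 2) E)) (by simp [Matrix.det_smul, ht0])
    have hT : (T : Matrix (Fin 2) (Fin 2) E) = t • (1 : Matrix (Fin 2) (Fin 2) E) := rfl
    have hdT : ((g * T : GL (Fin 2) E) : Matrix (Fin 2) (Fin 2) E).det = d * t ^ 2 := by
      rw [Units.val_mul, Matrix.det_mul, hT, Matrix.det_smul, Matrix.det_one, Fintype.card_fin,
        mul_one]
    obtain ⟨n, hn⟩ := (hfix (t * σ t)).1 (by rw [map_mul, hσ2, mul_comm])
    have hmem : g * T ∈ G₂ := by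
      rw [hG₂, hdT]
      refine ⟨n * (l : F)⁻¹, ?_⟩
      rw [map_mul, map_inv₀, hn, ht]
      field_simp
    refine ⟨⟨g * T, hmem⟩, ?_⟩
    rw [hψ]
    symm
    rw [QuotientGroup.eq, Subgroup.mem_subgroupOf, hZ]
    have h1 := hf1 ⟨g * T, hmem⟩
    have h2 := hf2 ⟨g * T, hmem⟩
    simp only [hdT] at h2
    refine ⟨Units.mk0 t ht0, ?_, ?_⟩
    · simp only [Subgroup.coe_mul, Subgroup.coe_inv, Prod.fst_mul, Prod.fst_inv, h1,
        inv_mul_cancel_left, hT, Units.val_mk0]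
    · simp only [Subgroup.coe_mul, Subgroup.coe_inv, Prod.snd_mul, Prod.snd_inv, Units.val_mul,
        Units.val_inv_eq_inv_val, map_mul, map_inv₀, Units.val_mk0, ht]
      field_simp
      linear_combination h2
  let χ : (G₂ ⧸ ZF.subgroupOf G₂) →* (G₁ ⧸ Z.subgroupOf G₁) :=
    QuotientGroup.lift _ ψ (fun g hg => (hker g).2 hg)
  have hχ : ∀ g : G₂, χ (QuotientGroup.mk g) = ψ g := fun _ => rfl
  refine ⟨MulEquiv.ofBijective χ ⟨?_, ?_⟩, ?_⟩
  · rw [injective_iff_map_eq_one]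
    intro q hq
    obtain ⟨g, rfl⟩ := QuotientGroup.mk_surjective q
    rw [hχ, hker] at hq
    exact (QuotientGroup.eq_one_iff g).2 hq
  · intro q
    obtain ⟨g, hg⟩ := hsurj q
    exact ⟨QuotientGroup.mk g, hg⟩
  · intro g p h1 h2
    rw [huniq g p (f g) h1 h2 (hf1 g) (hf2 g)]
    exact (hχ g).trans (hψ g)
end

section
/- Let Γ be a group and let ρ: Γ → GL₂(ℂ) be a group homomorphism whose associated 2-dimensional representation is irreducible, i.e., no 1-dimensional subspace of ℂ² is invariant under ρ(γ) for all γ ∈ Γ. Let C be the subgroup of PGL₂(ℂ) = GL₂(ℂ)/(ℂ×·I₂) consisting of the classes [A] of matrices A ∈ GL₂(ℂ) such that A·ρ(γ)·A⁻¹ ∈ ℂ×·ρ(γ) for all γ ∈ Γ (the centralizer in PGL₂(ℂ) of the image of the projective representation attached to ρ). For such A, define χ_A: Γ → ℂ× by A·ρ(γ)·A⁻¹ = χ_A(γ)·ρ(γ). Then [A] ↦ χ_A is a well-defined group isomorphism from C onto the group I(ρ) = {χ: Γ → ℂ× a homomorphism : ρ⊗χ ≅ ρ}, and every χ ∈ I(ρ)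 satisfies χ² = 1. -/
open Matrix

/-- The subgroup `ℂ^× · I₂` of nonzero scalar matrices inside `GL₂(ℂ)`. -/
def scalarSubgroup : Subgroup (GL (Fin 2) ℂ) :=
  (Units.map (algebraMap ℂ (Matrix (Fin 2) (Fin 2) ℂ)).toMonoidHom).range

instance : scalarSubgroup.Normal := by
  constructor
  intro x hx g
  obtain ⟨c, rfl⟩ := hx
  refine ⟨c, ?_⟩
  apply Units.ext
  simp only [Units.val_mul, Units.coe_map, RingHom.toMonoidHom_eq_coe,
    MonoidHom.coe_coe]
  rw [← Algebra.commutes, mul_assoc, Units.mul_inv, mul_one]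

/-- `PGL₂(ℂ) = GL₂(ℂ)/(ℂ^×·I₂)`. -/
abbrev PGL2C : Type := GL (Fin 2) ℂ ⧸ scalarSubgroup

/-- `A` intertwines `ρ` with `χ ⊗ ρ`. -/
def RelA {Γ : Type*} [Group Γ] (ρ : Γ →* GL (Fin 2) ℂ) (A : GL (Fin 2) ℂ) (χ : Γ → ℂˣ) : Prop :=
  ∀ γ : Γ, ((A * ρ γ * A⁻¹ : GL (Fin 2) ℂ) : Matrix (Fin 2) (Fin 2) ℂ)
        = (χ γ : ℂ) • ((ρ γ : GL (Fin 2) ℂ) : Matrix (Fin 2) (Fin 2) ℂ)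

theorem relA_iff {Γ : Type*} [Group Γ] (ρ : Γ →* GL (Fin 2) ℂ) (A : GL (Fin 2) ℂ) (χ : Γ → ℂˣ) :
    RelA ρ A χ ↔ ∀ γ, (A : Matrix (Fin 2) (Fin 2) ℂ) * (ρ γ).val = (χ γ : ℂ) • ((ρ γ).val * A.val) := by
  unfold RelA
  refine forall_congr' fun γ => ?_
  rw [Units.val_mul, Units.val_mul, Units.mul_inv_eq_iff_eq_mul, smul_mul_assoc]

theorem smul_GL_inj {a b : ℂ} (g : GL (Fin 2) ℂ) (h : a • g.val = b • g.val) : a = b := by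
  have h2 := congrArg (· * (g⁻¹).val) h
  simp only [smul_mul_assoc, Units.mul_inv] at h2
  have := congrFun (congrFun h2 0) 0
  simpa using this

theorem RelA.unique {Γ : Type*} [Group Γ] {ρ : Γ →* GL (Fin 2) ℂ} {A : GL (Fin 2) ℂ} {χ ψ : Γ → ℂˣ}
    (h : RelA ρ A χ) (h' : RelA ρ A ψ) : χ = ψ := by
  funext γ
  exact Units.ext (smul_GL_inj (ρ γ) ((h γ).symm.trans (h' γ)))

theorem RelA.mul {Γ : Type*} [Group Γ] {ρ : Γ →* GL (Fin 2) ℂ} {A B : GL (Fin 2) ℂ} {χ ψ : Γ → ℂˣ}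
    (h : RelA ρ A χ) (h' : RelA ρ B ψ) : RelA ρ (A * B) (χ * ψ) := by
  rw [relA_iff] at *
  intro γ
  rw [Units.val_mul, mul_assoc, h' γ, mul_smul_comm, ← mul_assoc, h γ, smul_mul_assoc, smul_smul,
    mul_assoc, Pi.mul_apply, Units.val_mul, mul_comm (χ γ : ℂ)]

theorem RelA.isHom {Γ : Type*} [Group Γ] {ρ : Γ →* GL (Fin 2) ℂ} {A : GL (Fin 2) ℂ} {χ : Γ → ℂˣ}
    (h : RelA ρ A χ) : ∃ ψ : Γ →* ℂˣ, ∀ γ, ψ γ = χ γ := by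
  refine ⟨MonoidHom.mk' χ ?_, fun _ => rfl⟩
  intro a b
  apply Units.ext
  apply smul_GL_inj (ρ (a * b))
  rw [← h (a * b), map_mul]
  have : A * (ρ a * ρ b) * A⁻¹ = (A * ρ a * A⁻¹) * (A * ρ b * A⁻¹) := by group
  rw [this, Units.val_mul, h a, h b, smul_mul_smul_comm, Units.val_mul, Units.val_mul]

theorem mem_scalar {c : ℂ} {g : GL (Fin 2) ℂ} (h : g.val = c • (1 : Matrix (Fin 2) (Fin 2) ℂ)) :
    g ∈ scalarSubgroup := by
  have hc : c ≠ 0 := by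
    rintro rfl
    rw [zero_smul] at h
    exact g.ne_zero h
  refine ⟨Units.mk0 c hc, ?_⟩
  apply Units.ext
  rw [h]
  simp [Algebra.algebraMap_eq_smul_one]

theorem scalar_spec {g : GL (Fin 2) ℂ} (h : g ∈ scalarSubgroup) :
    ∃ c : ℂ, g.val = c • (1 : Matrix (Fin 2) (Fin 2) ℂ) := by
  obtain ⟨c, rfl⟩ := h
  exact ⟨c, by simp [Algebra.algebraMap_eq_smul_one]⟩

theorem RelA.congr_mk {Γ : Type*} [Group Γ] {ρ : Γ →* GL (Fin 2) ℂ} {A B : GL (Fin 2) ℂ}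
    {χ : Γ → ℂˣ} (h : RelA ρ A χ) (hAB : (QuotientGroup.mk A : PGL2C) = QuotientGroup.mk B) :
    RelA ρ B χ := by
  obtain ⟨c, hc⟩ := scalar_spec (QuotientGroup.eq.1 hAB)
  have hB : B.val = c • A.val := by
    have : B = A * (A⁻¹ * B) := by group
    rw [this, Units.val_mul, hc]; simp
  rw [relA_iff] at *
  intro γ
  rw [hB, smul_mul_assoc, h γ, mul_smul_comm, smul_comm]

theorem ker_line {N : Matrix (Fin 2) (Fin 2) ℂ} (hN : N ≠ 0) {v w : Fin 2 → ℂ} (hv : v ≠ 0)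
    (h1 : N.mulVec v = 0) (h2 : N.mulVec w = 0) : ∃ c : ℂ, w = c • v := by
  have hd : v 0 * w 1 = v 1 * w 0 := by
    by_contra hne
    apply hN
    have hne' := sub_ne_zero.2 hne
    ext i j
    have e1 := congrFun h1 i
    have e2 := congrFun h2 i
    simp only [Matrix.mulVec, dotProduct, Fin.sum_univ_two, Pi.zero_apply] at e1 e2
    have a0 : N i 0 = 0 := by
      apply (mul_eq_zero.1 (?_ : N i 0 * (v 0 * w 1 - v 1 * w 0) = 0)).resolve_right hne'
      linear_combination w 1 * e1 - v 1 * e2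
    have a1 : N i 1 = 0 := by
      apply (mul_eq_zero.1 (?_ : N i 1 * (v 0 * w 1 - v 1 * w 0) = 0)).resolve_right hne'
      linear_combination v 0 * e2 - w 0 * e1
    fin_cases j
    · exact a0
    · exact a1
  by_cases h0 : v 0 = 0
  · have h1' : v 1 ≠ 0 := by
      intro h
      apply hv
      ext i
      fin_cases i
      · exact h0
      · exact h
    refine ⟨w 1 / v 1, ?_⟩
    ext i
    fin_cases i <;> simp <;> field_simp
    linear_combination -hd
  · refine ⟨w 0 / v 0, ?_⟩
    ext i
    fin_cases i <;> simp <;> field_simp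
    linear_combination hd

theorem schur2 {Γ : Type*} [Group Γ] (ρ : Γ →* GL (Fin 2) ℂ)
    (hirr : ¬ ∃ v : Fin 2 → ℂ, v ≠ 0 ∧ ∀ γ : Γ, ∃ c : ℂ,
      ((ρ γ : GL (Fin 2) ℂ) : Matrix (Fin 2) (Fin 2) ℂ).mulVec v = c • v)
    (B : Matrix (Fin 2) (Fin 2) ℂ) (hB : ∀ γ, B * (ρ γ).val = (ρ γ).val * B) :
    ∃ c : ℂ, B = c • (1 : Matrix (Fin 2) (Fin 2) ℂ) := by
  obtain ⟨μ, hμ⟩ := Module.End.exists_eigenvalue (Matrix.toLin' B)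
  obtain ⟨v, hv⟩ := hμ.exists_hasEigenvector
  have hv1 : B.mulVec v = μ • v := by simpa using hv.apply_eq_smul
  refine ⟨μ, ?_⟩
  by_contra hne
  apply hirr
  refine ⟨v, hv.2, fun γ => ?_⟩
  apply ker_line (sub_ne_zero.2 hne) hv.2
  · rw [Matrix.sub_mulVec, hv1, Matrix.smul_mulVec, Matrix.one_mulVec, sub_self]
  · rw [Matrix.sub_mulVec, Matrix.smul_mulVec, Matrix.one_mulVec, Matrix.mulVec_mulVec, hB,
      ← Matrix.mulVec_mulVec, hv1, Matrix.mulVec_smul, sub_self]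

theorem RelA.inj {Γ : Type*} [Group Γ] {ρ : Γ →* GL (Fin 2) ℂ}
    (hirr : ¬ ∃ v : Fin 2 → ℂ, v ≠ 0 ∧ ∀ γ : Γ, ∃ c : ℂ,
      ((ρ γ : GL (Fin 2) ℂ) : Matrix (Fin 2) (Fin 2) ℂ).mulVec v = c • v)
    {A B : GL (Fin 2) ℂ} {χ : Γ → ℂˣ} (h : RelA ρ A χ) (h' : RelA ρ B χ) :
    (QuotientGroup.mk A : PGL2C) = QuotientGroup.mk B := by
  have key : ∀ γ, (A⁻¹ * B) * ρ γ = ρ γ * (A⁻¹ * B) := by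
    intro γ
    have e : A * ρ γ * A⁻¹ = B * ρ γ * B⁻¹ := Units.ext ((h γ).trans (h' γ).symm)
    have e2 : ρ γ = A⁻¹ * (B * ρ γ * B⁻¹) * A := by rw [← e]; group
    conv_rhs => rw [e2]
    group
  obtain ⟨c, hc⟩ := schur2 ρ hirr (A⁻¹ * B).val fun γ => by
    rw [← Units.val_mul, key γ, Units.val_mul]
  exact QuotientGroup.eq.2 (mem_scalar hc)

/-- for an irreducible 2-dimensional representation `ρ : Γ → GL₂(ℂ)`,
the map `[A] ↦ χ_A` (where `A ρ(γ) A⁻¹ = χ_A(γ) ρ(γ)`) is a well-defined group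
isomorphism from the centralizer `C ⊆ PGL₂(ℂ)` of the projective image of `ρ`
onto `I(ρ) = {χ : Γ → ℂ^× : ρ ⊗ χ ≅ ρ}`, and every `χ ∈ I(ρ)` satisfies `χ² = 1`. -/
theorem stmt8 {Γ : Type*} [Group Γ] (ρ : Γ →* GL (Fin 2) ℂ)
    (hirr : ¬ ∃ v : Fin 2 → ℂ, v ≠ 0 ∧ ∀ γ : Γ, ∃ c : ℂ,
      ((ρ γ : GL (Fin 2) ℂ) : Matrix (Fin 2) (Fin 2) ℂ).mulVec v = c • v)
    (C : Subgroup PGL2C)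
    (hC : ∀ x : PGL2C, x ∈ C ↔ ∃ A : GL (Fin 2) ℂ,
      (QuotientGroup.mk A : PGL2C) = x ∧ ∀ γ : Γ, ∃ c : ℂˣ,
        ((A * ρ γ * A⁻¹ : GL (Fin 2) ℂ) : Matrix (Fin 2) (Fin 2) ℂ)
          = (c : ℂ) • ((ρ γ : GL (Fin 2) ℂ) : Matrix (Fin 2) (Fin 2) ℂ))
    (I : Subgroup (Γ →* ℂˣ))
    (hI : ∀ χ : Γ →* ℂˣ, χ ∈ I ↔ ∃ A : GL (Fin 2) ℂ, ∀ γ : Γ,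
      ((A * ρ γ * A⁻¹ : GL (Fin 2) ℂ) : Matrix (Fin 2) (Fin 2) ℂ)
        = (χ γ : ℂ) • ((ρ γ : GL (Fin 2) ℂ) : Matrix (Fin 2) (Fin 2) ℂ)) :
    (∃ e : C ≃* I,
      ∀ (A : GL (Fin 2) ℂ) (hA : (QuotientGroup.mk A : PGL2C) ∈ C) (γ : Γ),
        ((A * ρ γ * A⁻¹ : GL (Fin 2) ℂ) : Matrix (Fin 2) (Fin 2) ℂ)
          = ((((e ⟨QuotientGroup.mk A, hA⟩ : I) : Γ →* ℂˣ) γ : ℂ)) •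
            ((ρ γ : GL (Fin 2) ℂ) : Matrix (Fin 2) (Fin 2) ℂ)) ∧
    (∀ χ ∈ I, ∀ γ : Γ, χ γ * χ γ = 1) := by
  constructor
  · have ex : ∀ x : C, ∃ χ : I, ∀ A : GL (Fin 2) ℂ, (QuotientGroup.mk A : PGL2C) = x →
        RelA ρ A (χ : Γ →* ℂˣ) := by
      rintro ⟨x, hx⟩
      obtain ⟨A, rfl, hA⟩ := (hC x).1 hx
      choose c hc using hA
      have hR : RelA ρ A c := hc
      obtain ⟨ψ, hψ⟩ := hR.isHom
      obtain rfl : (ψ : Γ → ℂˣ) = c := funext hψ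
      exact ⟨⟨ψ, (hI ψ).2 ⟨A, hc⟩⟩, fun B hB => hR.congr_mk hB.symm⟩
    choose f hf using ex
    have fmul : ∀ x y, f (x * y) = f x * f y := by
      rintro ⟨x, hx⟩ ⟨y, hy⟩
      obtain ⟨A, rfl⟩ := QuotientGroup.mk_surjective x
      obtain ⟨B, rfl⟩ := QuotientGroup.mk_surjective y
      apply Subtype.ext
      apply DFunLike.coe_injective
      exact (hf (⟨_, hx⟩ * ⟨_, hy⟩) (A * B) rfl).unique ((hf ⟨_, hx⟩ A rfl).mul (hf ⟨_, hy⟩ B rfl))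
    have finj : Function.Injective f := by
      rintro ⟨x, hx⟩ ⟨y, hy⟩ hxy
      obtain ⟨A, rfl⟩ := QuotientGroup.mk_surjective x
      obtain ⟨B, rfl⟩ := QuotientGroup.mk_surjective y
      apply Subtype.ext
      have h1 := hf ⟨_, hx⟩ A rfl
      rw [hxy] at h1
      exact h1.inj hirr (hf ⟨_, hy⟩ B rfl)
    have fsurj : Function.Surjective f := by
      rintro ⟨χ, hχ⟩
      obtain ⟨A, hA⟩ := (hI χ).1 hχ
      have hR : RelA ρ A χ := hA
      refine ⟨⟨QuotientGroup.mk A, (hC _).2 ⟨A, rfl, fun γ => ⟨χ γ, hA γ⟩⟩⟩, ?_⟩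
      apply Subtype.ext
      apply DFunLike.coe_injective
      exact (hf _ A rfl).unique hR
    exact ⟨MulEquiv.ofBijective (MonoidHom.mk' f fmul) ⟨finj, fsurj⟩,
      fun A hA γ => hf ⟨_, hA⟩ A rfl γ⟩
  · intro χ hχ γ
    obtain ⟨A, hA⟩ := (hI χ).1 hχ
    have h := congrArg Matrix.det (hA γ)
    have hd : (ρ γ).val.det ≠ 0 := ((Matrix.isUnit_iff_isUnit_det _).1 (ρ γ).isUnit).ne_zero
    have hl : ((A * ρ γ * A⁻¹ : GL (Fin 2) ℂ) : Matrix (Fin 2) (Fin 2) ℂ).det = (ρ γ).val.det := by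
      rw [Units.val_mul, Units.val_mul, Matrix.det_mul_right_comm, ← Units.val_mul, mul_inv_cancel,
        Units.val_one, one_mul]
    rw [hl, Matrix.det_smul, Fintype.card_fin] at h
    apply Units.ext
    rw [Units.val_mul, Units.val_one]
    apply mul_right_cancel₀ hd
    linear_combination -h
end

section
/- Let Γ be a group and let ρ: Γ → GL₂(ℂ) be a group homomorphism whose associated 2-dimensional representation is irreducible, i.e., no 1-dimensional subspace of ℂ² is invariant under ρ(γ) for all γ ∈ Γ. Then the group I(ρ) = {χ: Γ → ℂ× a homomorphism : there exists A ∈ GL₂(ℂ) with A·ρ(γ)·A⁻¹ = χ(γ)·ρ(γ) for all γ} is, under pointwise multiplication, an elementary abelian 2-group of order 1, 2, or 4; in particular every element of I(ρ) has order dividing 2 and |I(ρ)| divides 4. -/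
open Matrix

/-- `I(ρ) = {χ : Γ → ℂ^× : ρ ⊗ χ ≅ ρ}`, the set of characters `χ` of `Γ` for which
there is `A ∈ GL₂(ℂ)` with `A ρ(γ) A⁻¹ = χ(γ) ρ(γ)` for all `γ`. -/
def selfTwists {Γ : Type*} [Group Γ] (ρ : Γ →* GL (Fin 2) ℂ) : Set (Γ →* ℂˣ) :=
  {χ | ∃ A : GL (Fin 2) ℂ, ∀ γ : Γ,
    ((A * ρ γ * A⁻¹ : GL (Fin 2) ℂ) : Matrix (Fin 2) (Fin 2) ℂ)
      = (χ γ : ℂ) • ((ρ γ : GL (Fin 2) ℂ) : Matrix (Fin 2) (Fin 2) ℂ)}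

theorem mem_selfTwists_iff {Γ : Type*} [Group Γ] (ρ : Γ →* GL (Fin 2) ℂ) (χ : Γ →* ℂˣ) :
    χ ∈ selfTwists ρ ↔ ∃ A : GL (Fin 2) ℂ, ∀ γ : Γ,
      (A : Matrix (Fin 2) (Fin 2) ℂ) * (ρ γ : Matrix (Fin 2) (Fin 2) ℂ)
        = (χ γ : ℂ) • ((ρ γ : Matrix (Fin 2) (Fin 2) ℂ) * (A : Matrix (Fin 2) (Fin 2) ℂ)) := by
  refine exists_congr fun A => forall_congr' fun γ => ?_
  rw [Units.val_mul, Units.val_mul, Units.mul_inv_eq_iff_eq_mul, Matrix.smul_mul]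

theorem selfTwists_sq {Γ : Type*} [Group Γ] (ρ : Γ →* GL (Fin 2) ℂ) (χ : Γ →* ℂˣ)
    (h : χ ∈ selfTwists ρ) (γ : Γ) : χ γ * χ γ = 1 := by
  obtain ⟨A, hA⟩ := (mem_selfTwists_iff ρ χ).1 h
  have h1 := congrArg Matrix.det (hA γ)
  rw [Matrix.det_smul, Matrix.det_mul, Matrix.det_mul, Fintype.card_fin] at h1
  have hA0 : (A : Matrix (Fin 2) (Fin 2) ℂ).det ≠ 0 :=
    ((Matrix.isUnit_iff_isUnit_det _).1 A.isUnit).ne_zero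
  have hr0 : (ρ γ : Matrix (Fin 2) (Fin 2) ℂ).det ≠ 0 :=
    ((Matrix.isUnit_iff_isUnit_det _).1 (ρ γ).isUnit).ne_zero
  have h2 : ((χ γ : ℂ) ^ 2) = 1 := by
    apply mul_right_cancel₀ (mul_ne_zero hA0 hr0)
    linear_combination -h1
  ext
  push_cast
  rw [← sq, h2]

/-- The subgroup of self-twists. -/
def selfTwistsSubgroup {Γ : Type*} [Group Γ] (ρ : Γ →* GL (Fin 2) ℂ) : Subgroup (Γ →* ℂˣ) where
  carrier := selfTwists ρ
  one_mem' := (mem_selfTwists_iff ρ 1).2 ⟨1, fun γ => by simp⟩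
  mul_mem' := by
    intro χ ψ hχ hψ
    obtain ⟨A, hA⟩ := (mem_selfTwists_iff ρ χ).1 hχ
    obtain ⟨B, hB⟩ := (mem_selfTwists_iff ρ ψ).1 hψ
    refine (mem_selfTwists_iff ρ _).2 ⟨A * B, fun γ => ?_⟩
    rw [Units.val_mul, Matrix.mul_assoc, hB, Matrix.mul_smul, ← Matrix.mul_assoc, hA,
      Matrix.smul_mul, smul_smul, Matrix.mul_assoc, MonoidHom.mul_apply, Units.val_mul, mul_comm]
  inv_mem' := by
    intro χ hχ
    have : χ⁻¹ = χ := by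
      ext γ
      rw [MonoidHom.inv_apply, inv_eq_of_mul_eq_one_left (selfTwists_sq ρ χ hχ γ)]
    rw [this]; exact hχ

theorem selfTwists_indep {Γ : Type*} [Group Γ] (ρ : Γ →* GL (Fin 2) ℂ)
    (A : selfTwistsSubgroup ρ → GL (Fin 2) ℂ)
    (hA : ∀ χ : selfTwistsSubgroup ρ, ∀ γ : Γ,
      (A χ : Matrix (Fin 2) (Fin 2) ℂ) * (ρ γ : Matrix (Fin 2) (Fin 2) ℂ)
        = ((χ : Γ →* ℂˣ) γ : ℂ) •
          ((ρ γ : Matrix (Fin 2) (Fin 2) ℂ) * (A χ : Matrix (Fin 2) (Fin 2) ℂ))) :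
    LinearIndependent ℂ (fun χ => (A χ : Matrix (Fin 2) (Fin 2) ℂ)) := by
  have hinj : Function.Injective
      (fun χ : selfTwistsSubgroup ρ => (Units.coeHom ℂ).comp (χ : Γ →* ℂˣ)) := by
    intro χ ψ h
    ext γ
    exact DFunLike.congr_fun h γ
  have hD := (linearIndependent_monoidHom Γ ℂ).comp _ hinj
  rw [linearIndependent_iff'] at hD ⊢
  intro s a hs χ hχ
  have key : ∀ γ : Γ, ∑ ψ ∈ s, (a ψ * ((ψ : Γ →* ℂˣ) γ : ℂ)) •
      (A ψ : Matrix (Fin 2) (Fin 2) ℂ) = 0 := by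
    intro γ
    have h1 := congrArg (fun M => M * (ρ γ : Matrix (Fin 2) (Fin 2) ℂ)) hs
    simp only [Finset.sum_mul, Matrix.smul_mul, hA, Matrix.zero_mul, smul_smul] at h1
    simp only [← Matrix.mul_smul, ← Finset.mul_sum] at h1
    exact (Units.mul_right_eq_zero (ρ γ)).1 h1
  by_contra hne
  apply (A χ).ne_zero
  ext i j
  have h3 := hD s (fun ψ => a ψ * (A ψ : Matrix (Fin 2) (Fin 2) ℂ) i j) (by
    funext γ
    have h4 := congrFun (congrFun (key γ) i) j
    simp only [Matrix.sum_apply, Matrix.smul_apply, Matrix.zero_apply, smul_eq_mul] at h4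
    simp only [Finset.sum_apply, Pi.smul_apply, smul_eq_mul, Function.comp, Pi.zero_apply,
      MonoidHom.comp_apply, Units.coeHom_apply]
    rw [← h4]
    refine Finset.sum_congr rfl fun ψ _ => ?_
    ring) χ hχ
  exact (mul_eq_zero.1 h3).resolve_left hne

/-- for an irreducible 2-dimensional representation `ρ : Γ → GL₂(ℂ)`,
the group `I(ρ)` of characters `χ` with `ρ ⊗ χ ≅ ρ` is an elementary abelian
2-group of order 1, 2 or 4: every element squares to the trivial character, and
`I(ρ)` is finite of cardinality 1, 2 or 4. -/
theorem stmt9 {Γ : Type*} [Group Γ] (ρ : Γ →* GL (Fin 2) ℂ)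
    (hirr : ¬ ∃ v : Fin 2 → ℂ, v ≠ 0 ∧ ∀ γ : Γ, ∃ c : ℂ,
      ((ρ γ : GL (Fin 2) ℂ) : Matrix (Fin 2) (Fin 2) ℂ).mulVec v = c • v) :
    (∀ χ ∈ selfTwists ρ, ∀ γ : Γ, χ γ * χ γ = 1) ∧
    (selfTwists ρ).Finite ∧
    ((selfTwists ρ).ncard = 1 ∨ (selfTwists ρ).ncard = 2 ∨ (selfTwists ρ).ncard = 4) := by
  have hsq := selfTwists_sq ρ
  have hex : ∀ χ : selfTwistsSubgroup ρ, ∃ A : GL (Fin 2) ℂ, ∀ γ : Γ,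
      (A : Matrix (Fin 2) (Fin 2) ℂ) * (ρ γ : Matrix (Fin 2) (Fin 2) ℂ)
        = ((χ : Γ →* ℂˣ) γ : ℂ) •
          ((ρ γ : Matrix (Fin 2) (Fin 2) ℂ) * (A : Matrix (Fin 2) (Fin 2) ℂ)) :=
    fun χ => (mem_selfTwists_iff ρ χ).1 χ.2
  choose A hA using hex
  have hli := selfTwists_indep ρ A hA
  have hfin : Finite (selfTwistsSubgroup ρ) := hli.finite
  have hf : (selfTwists ρ).Finite := hfin
  refine ⟨hsq, hf, ?_⟩
  have := Fintype.ofFinite (selfTwistsSubgroup ρ)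
  have hle := hli.fintype_card_le_finrank
  rw [Module.finrank_matrix, ← Nat.card_eq_fintype_card] at hle
  simp only [Fintype.card_fin, Module.finrank_self] at hle
  have hcard : (selfTwists ρ).ncard = Nat.card (selfTwistsSubgroup ρ) := rfl
  rw [hcard]
  have hpos : 0 < Nat.card (selfTwistsSubgroup ρ) := Nat.card_pos
  have h3 : Nat.card (selfTwistsSubgroup ρ) ≠ 3 := by
    intro h3
    have hone : ∀ χ : selfTwistsSubgroup ρ, χ = 1 := by
      intro χ
      have e3 : χ ^ 3 = 1 := h3 ▸ pow_card_eq_one'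
      have e2 : χ * χ = 1 := Subtype.ext (MonoidHom.ext fun γ => hsq χ χ.2 γ)
      rwa [pow_succ, sq, e2, one_mul] at e3
    have : Subsingleton (selfTwistsSubgroup ρ) := ⟨fun a b => (hone a).trans (hone b).symm⟩
    have := Finite.card_le_one_iff_subsingleton.2 this
    omega
  omega
end
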